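/- arXiv:1901.07232 — 5 statements merged into one kernel-verified Lean document; each statement's English description precedes it below -/
import Mathlib

section
/- Let G be a countable group and let α be an action of G by homeomorphisms on a proper metric space (X,d_X) that is expansive with expansive constant c > 0 and has the pseudo-orbit tracing property. Then for every ε with 0 < ε < c there exists δ > 0 such that: for every action β of G by homeomorphisms on a metric space (Y,d_Y), if there exist δ-GH approximations f : X → Y from α to β and u : Y → X from β to α, then there exists an ε-isometry h : Y → X with α_g ∘ h = h ∘ β_g for every g ∈ G; and if moreover Y is compact, h can be chosen continuous. -/
/-!
For `y : Y` the family `g ↦ u (β g y)` is a pseudo-orbit of `α`, because `u` almost intertwines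
`β` and `α`. By the tracing property it is traced within `ε / 4` by some point `h y`, and by
expansiveness (`IsExpansive.eq_of_forall_dist_le`) that point is unique. Uniqueness gives
equivariance: `α k (h y)` traces the pseudo-orbit of `β k y`. Since `h` is uniformly close to `u`,
it is an `ε`-isometry.

The map `h` is continuous even when `Y` is not compact (`continuous_of_traces`): as `y' → y`, the
points `h y'` stay in a compact ball of `X`, and for each fixed `g` the distance between
`α g (h y')` and `α g (h y)` is eventually less than `c`, so expansiveness makes `h y` the only
cluster point. Thus a single map `h` serves both conclusions.
-/

open Metric Filter Topology

/-- An `ε`-isometry (`ε`-GH approximation) between metric spaces. -/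
def IsEpsIsometry {X Y : Type*} [MetricSpace X] [MetricSpace Y] (ε : ℝ) (f : X → Y) : Prop :=
  (∀ x x' : X, |dist (f x) (f x') - dist x x'| ≤ ε) ∧ ∀ y : Y, ∃ x : X, dist y (f x) ≤ ε

/-- `α : G → X → X` is a (left) group action. -/
def IsActionOf {G X : Type*} [Group G] (α : G → X → X) : Prop :=
  (∀ x, α 1 x = x) ∧ ∀ g h : G, ∀ x, α (g * h) x = α g (α h x)

/-- An `(ε, S)`-GH approximation from the action `α` to the action `β`. -/
def IsGHA {G X Y : Type*} [Group G] [MetricSpace X] [MetricSpace Y]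
    (α : G → X → X) (β : G → Y → Y) (ε : ℝ) (S : Set G) (f : X → Y) : Prop :=
  IsEpsIsometry ε f ∧ ∀ s ∈ S, ∀ x : X, dist (β s (f x)) (f (α s x)) ≤ ε

/-- Expansiveness with expansive constant `c`. -/
def IsExpansive {G X : Type*} [Group G] [MetricSpace X] (α : G → X → X) (c : ℝ) : Prop :=
  ∀ x y : X, x ≠ y → ∃ g : G, c < dist (α g x) (α g y)

/-- Pseudo-orbit tracing property. -/
def HasPOTP {G X : Type*} [Group G] [MetricSpace X] (α : G → X → X) : Prop :=
  ∀ ε : ℝ, 0 < ε → ∃ δ : ℝ, 0 < δ ∧ ∃ S : Finset G,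
    ∀ xs : G → X, (∀ s ∈ S, ∀ g : G, dist (α s (xs g)) (xs (s * g)) < δ) →
      ∃ x : X, ∀ g : G, dist (α g x) (xs g) < ε

theorem IsExpansive.eq_of_forall_dist_le {G X : Type*} [Group G] [MetricSpace X]
    {α : G → X → X} {c : ℝ} (hexp : IsExpansive α c) {x y : X}
    (h : ∀ g, dist (α g x) (α g y) ≤ c) : x = y := by
  by_contra hne
  obtain ⟨g, hg⟩ := hexp x y hne
  exact absurd (h g) (not_le.2 hg)

/-- Tracing points depend continuously on the orbit they trace, although `u` itself need not be
continuous: its jumps have size at most `δ`, which the gap `2 * r + δ < c` absorbs. -/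
theorem continuous_of_traces {G X Y : Type*} [Group G] [MetricSpace X] [ProperSpace X]
    [MetricSpace Y] {α : G → X → X} {β : G → Y → Y} (hα : ∀ g, Continuous (α g))
    (hβ : ∀ g, Continuous (β g)) {c r δ : ℝ} (hexp : IsExpansive α c) (hc : 2 * r + δ < c)
    {u : Y → X} (hu : ∀ y y', dist (u y) (u y') ≤ dist y y' + δ)
    {h : Y → X} (hbd : ∃ C, ∀ y y', dist (h y) (h y') ≤ dist y y' + C)
    (htr : ∀ y g, dist (α g (h y)) (u (β g y)) < r) : Continuous h := by
  obtain ⟨C, hC⟩ := hbd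
  refine continuous_iff_continuousAt.2 fun y => ?_
  refine (isCompact_closedBall (h y) (1 + C)).tendsto_nhds_of_unique_mapClusterPt ?_ ?_
  · -- Boundedness near `y` puts the values of `h` into a ball, which is compact by properness.
    filter_upwards [Metric.ball_mem_nhds y one_pos] with y' hy'
    have := hC y' y
    rw [Metric.mem_ball] at hy'
    rw [Metric.mem_closedBall]
    linarith
  · intro x _ hx
    refine hexp.eq_of_forall_dist_le fun g => ?_
    have hcl : IsClosed {z | dist (α g z) (α g (h y)) ≤ c} :=
      isClosed_le ((hα g).dist continuous_const) continuous_const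
    suffices hev : ∀ᶠ y' in 𝓝 y, h y' ∈ {z | dist (α g z) (α g (h y)) ≤ c} from
      isClosed_iff_clusterPt.1 hcl x (ClusterPt.mono hx (le_principal_iff.2 hev))
    have hpos : 0 < c - (2 * r + δ) := by linarith
    filter_upwards [(hβ g).continuousAt.eventually (Metric.ball_mem_nhds (β g y) hpos)]
      with y' hy'
    have h1 := htr y' g
    have h2 := htr y g
    have h3 := hu (β g y') (β g y)
    have h4 := dist_triangle4_right (α g (h y')) (α g (h y)) (u (β g y')) (u (β g y))
    linarith

theorem stmt2 {G : Type*} [Group G] [Countable G]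
    {X : Type*} [MetricSpace X] [ProperSpace X]
    (α : G → X → X) (hact : IsActionOf α) (hcont : ∀ g : G, Continuous (α g))
    (c : ℝ) (hc : 0 < c) (hexp : IsExpansive α c) (hpotp : HasPOTP α)
    (ε : ℝ) (hε0 : 0 < ε) (hεc : ε < c) :
    ∃ δ : ℝ, 0 < δ ∧
      ∀ (Y : Type*) [MetricSpace Y] (β : G → Y → Y),
        IsActionOf β → (∀ g : G, Continuous (β g)) →
        ∀ (f : X → Y) (u : Y → X),
          IsGHA α β δ Set.univ f → IsGHA β α δ Set.univ u →
          (∃ h : Y → X, IsEpsIsometry ε h ∧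
            ∀ (g : G) (y : Y), α g (h y) = h (β g y)) ∧
          (∀ (_ : CompactSpace Y), ∃ h : Y → X, Continuous h ∧ IsEpsIsometry ε h ∧
            ∀ (g : G) (y : Y), α g (h y) = h (β g y)) := by
  obtain ⟨δ₀, hδ₀, S, hS⟩ := hpotp (ε / 4) (by linarith)
  -- `δ ≤ ε / 8` keeps `2 * (ε / 4) + δ` below `ε < c`; `δ < δ₀` makes orbits pseudo-orbits.
  refine ⟨min (ε / 8) (δ₀ / 2), lt_min (by linarith) (by linarith), ?_⟩
  intro Y _ β hβ hβc _ u _ hu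
  generalize hδ : min (ε / 8) (δ₀ / 2) = δ at hu
  have hδ1 : δ ≤ ε / 8 := hδ ▸ min_le_left _ _
  have hδ2 : δ ≤ δ₀ / 2 := hδ ▸ min_le_right _ _
  obtain ⟨⟨hiso, hsurj⟩, heq⟩ := hu
  have htrace : ∀ y, ∃ x, ∀ g, dist (α g x) (u (β g y)) < ε / 4 := by
    intro y
    refine hS (fun g => u (β g y)) fun s _ g => ?_
    have := heq s (Set.mem_univ s) (β g y)
    rw [← hβ.2] at this
    linarith
  choose h hh using htrace
  have hclose : ∀ y, dist (h y) (u y) < ε / 4 := by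
    intro y
    simpa only [hact.1, hβ.1] using hh y 1
  have hequiv : ∀ g y, α g (h y) = h (β g y) := by
    intro k y
    refine hexp.eq_of_forall_dist_le fun g => ?_
    have h1 := hh y (g * k)
    have h2 := hh (β k y) g
    rw [hact.2, hβ.2] at h1
    have := dist_triangle_right (α g (α k (h y))) (α g (h (β k y))) (u (β g (β k y)))
    linarith
  have hdist : ∀ y y', |dist (h y) (h y') - dist y y'| ≤ ε := by
    intro y y'
    have h1 := abs_le.1 (hiso y y')
    have h2 := hclose y
    have h3 := hclose y'
    have h4 := dist_triangle4_right (h y) (h y') (u y) (u y')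
    have h5 := dist_triangle4_left (h y) (h y') (u y) (u y')
    rw [abs_le]
    constructor <;> linarith
  have hisoh : IsEpsIsometry ε h := by
    refine ⟨hdist, fun x => ?_⟩
    obtain ⟨y, hy⟩ := hsurj x
    refine ⟨y, ?_⟩
    have := dist_triangle_right x (h y) (u y)
    linarith [hclose y]
  have hch : Continuous h := by
    refine continuous_of_traces hcont hβc hexp (r := ε / 4) (δ := δ) (by linarith)
      (fun y y' => ?_) ⟨ε, fun y y' => ?_⟩ hh
    · linarith [(abs_le.1 (hiso y y')).2]
    · linarith [(abs_le.1 (hdist y y')).2]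
  exact ⟨⟨h, hisoh, hequiv⟩, fun _ => ⟨h, hch, hisoh, hequiv⟩⟩
end

section
/- Let α be an action of a countable group G by homeomorphisms on a proper metric space (X,d) that is expansive with expansive constant c > 0. Then for every x ∈ X and every ε > 0 there exists a nonempty finite subset F of G such that for every y ∈ X, if d(α_g(x), α_g(y)) ≤ c for all g ∈ F, then d(x,y) < ε. -/
open Metric

/-!
The set `K = closedBall x c \ ball x ε` is compact because `X` is proper. By expansiveness the open
sets `{y | c < dist (α g x) (α g y)}`, `g : G`, cover `X \ {x}`, hence `K`, so finitely many of them
do. Adjoining `1` to the corresponding finite set of group elements forces `y ∈ closedBall x c`,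
so a `y` staying `c`-close to `x` along this finite set cannot be at distance at least `ε` from `x`.
-/

theorem stmt13 {G : Type*} [Group G] [Countable G]
    {X : Type*} [MetricSpace X] [ProperSpace X]
    (α : G → X → X) (hact : IsActionOf α) (hcont : ∀ g : G, Continuous (α g))
    (c : ℝ) (hc : 0 < c) (hexp : IsExpansive α c)
    (x : X) (ε : ℝ) (hε : 0 < ε) :
    ∃ F : Finset G, F.Nonempty ∧
      ∀ y : X, (∀ g ∈ F, dist (α g x) (α g y) ≤ c) → dist x y < ε := by
  classical
  have hK : IsCompact (closedBall x c \ ball x ε) := (isCompact_closedBall x c).diff isOpen_ball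
  obtain ⟨t, ht⟩ := hK.elim_finite_subcover (fun g : G => {y | c < dist (α g x) (α g y)})
    (fun g => isOpen_lt continuous_const (continuous_const.dist (hcont g)))
    (fun y hy => by
      have hne : x ≠ y := fun h => hy.2 (h ▸ mem_ball_self hε)
      exact Set.mem_iUnion.2 (hexp x y hne))
  refine ⟨insert 1 t, Finset.insert_nonempty 1 t, fun y hy => ?_⟩
  by_contra! hlt
  have h1 : dist x y ≤ c := by
    simpa only [hact.1] using hy 1 (Finset.mem_insert_self 1 t)
  have hyK : y ∈ closedBall x c \ ball x ε :=
    ⟨mem_closedBall'.2 h1, fun h => (mem_ball'.1 h).not_ge hlt⟩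
  obtain ⟨g, hg, hgy⟩ := Set.mem_iUnion₂.1 (ht hyK)
  exact (hy g (Finset.mem_insert_of_mem hg)).not_gt hgy
end

section
/- Let (X,d_X) and (Y,d_Y) be complete separable (Polish) metric spaces, ε > 0, and let f : X → Y be an ε-GH approximation (i.e. an ε-isometry). Then there exists a Borel measurable map f_1 : X → Y which is a 5ε-GH approximation (i.e. a 5ε-isometry) and satisfies d_Y(f(x), f_1(x)) ≤ 2ε for every x ∈ X. -/
/-! The map `f₁` replaces `x` by the first point of a dense sequence `u` of `X` lying within `ε`
of `x`, and then applies `f`. The index of that point is a measurable function of `x`, since each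
condition `dist x (u n) < ε` is open, so `f₁` is measurable, having factored through `ℕ`.
The distortion bound gives `dist (f x) (f₁ x) ≤ ε + ε`, and the triangle inequality then yields
distortion at most `2ε + ε + 2ε` and a `3ε`-dense image. -/

open Metric

theorem stmt14 {X Y : Type*}
    [MetricSpace X] [CompleteSpace X] [TopologicalSpace.SeparableSpace X]
    [MeasurableSpace X] [BorelSpace X]
    [MetricSpace Y] [CompleteSpace Y] [TopologicalSpace.SeparableSpace Y]
    [MeasurableSpace Y] [BorelSpace Y]
    (ε : ℝ) (hε : 0 < ε) (f : X → Y) (hf : IsEpsIsometry ε f) :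
    ∃ f₁ : X → Y, Measurable f₁ ∧ IsEpsIsometry (5 * ε) f₁ ∧
      ∀ x : X, dist (f x) (f₁ x) ≤ 2 * ε := by
  -- On an empty `X` there is no dense sequence, but every map out of `X` is measurable.
  rcases isEmpty_or_nonempty X with hX | hX
  · exact ⟨f, measurable_of_empty f, ⟨fun x => isEmptyElim x, fun y => isEmptyElim (hf.2 y).choose⟩,
      fun x => isEmptyElim x⟩
  classical
  have hp : ∀ x : X, ∃ n, dist x (TopologicalSpace.denseSeq X n) < ε := fun x =>
    (TopologicalSpace.denseRange_denseSeq X).exists_dist_lt x hε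
  have hN : Measurable fun x => Nat.find (hp x) := measurable_find hp fun k =>
    (isOpen_lt (continuous_id.dist continuous_const) continuous_const).measurableSet
  set f₁ : X → Y := fun x => f (TopologicalSpace.denseSeq X (Nat.find (hp x))) with hf₁
  have hclose : ∀ x, dist (f x) (f₁ x) ≤ 2 * ε := fun x => by
    have h1 := (abs_le.1 (hf.1 x (TopologicalSpace.denseSeq X (Nat.find (hp x))))).2
    have h2 := Nat.find_spec (hp x)
    simp only [hf₁]
    linarith
  refine ⟨f₁, ?_, ⟨fun x x' => ?_, fun y => ?_⟩, hclose⟩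
  · exact (measurable_of_countable fun n => f (TopologicalSpace.denseSeq X n)).comp hN
  · have h := abs_le.1 (hf.1 x x')
    have hx := hclose x
    have hx' := hclose x'
    have t1 := dist_triangle4 (f x) (f₁ x) (f₁ x') (f x')
    have t2 := dist_triangle4 (f₁ x) (f x) (f x') (f₁ x')
    rw [dist_comm (f₁ x') (f x')] at t1
    rw [dist_comm (f₁ x) (f x)] at t2
    rw [abs_le]
    constructor <;> linarith
  · obtain ⟨x, hx⟩ := hf.2 y
    exact ⟨x, by linarith [dist_triangle y (f x) (f₁ x), hclose x]⟩
end

section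
/- Let (X,d_X) and (Y,d_Y) be complete separable (Polish) metric spaces, ε > 0, and let f : X → Y be an ε-GH approximation (i.e. an ε-isometry). Then there exists a Borel measurable map f_1' : Y → X which is a 9ε-GH approximation (i.e. a 9ε-isometry) and satisfies d_X(x, f_1'(f(x))) ≤ 4ε for every x ∈ X and d_Y(y, f(f_1'(y))) ≤ 4ε for every y ∈ Y. -/
/-!
Choose for each point `z` of a dense sequence of `Y` a point of `X` whose image is `ε`-close to `z`,
and send `y` to the point chosen for the first `z` within `ε` of `y`. This map `g` takes countably many
values on Borel pieces, hence is Borel, and `dist y (f (g y)) ≤ 2 * ε`. Since `f` distorts distances by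
at most `ε`, the remaining estimates (with constants `3` and `5`) follow from the triangle inequality.
-/

open Metric

theorem stmt15 {X Y : Type*}
    [MetricSpace X] [CompleteSpace X] [TopologicalSpace.SeparableSpace X]
    [MeasurableSpace X] [BorelSpace X]
    [MetricSpace Y] [CompleteSpace Y] [TopologicalSpace.SeparableSpace Y]
    [MeasurableSpace Y] [BorelSpace Y]
    (ε : ℝ) (hε : 0 < ε) (f : X → Y) (hf : IsEpsIsometry ε f) :
    ∃ f₁' : Y → X, Measurable f₁' ∧ IsEpsIsometry (9 * ε) f₁' ∧
      (∀ x : X, dist x (f₁' (f x)) ≤ 4 * ε) ∧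
      (∀ y : Y, dist y (f (f₁' y)) ≤ 4 * ε) := by
  classical
  obtain ⟨hiso, hsurj⟩ := hf
  -- A measurable almost right inverse of `f` is all that is needed.
  obtain ⟨g, hg, hfg⟩ : ∃ g : Y → X, Measurable g ∧ ∀ y, dist y (f (g y)) ≤ 2 * ε := by
    rcases isEmpty_or_nonempty Y with hY | hY
    · exact ⟨fun y => isEmptyElim y, measurable_of_empty _, fun y => isEmptyElim y⟩
    choose s hs using hsurj
    have hN : ∀ y : Y, ∃ n, dist y (TopologicalSpace.denseSeq Y n) < ε := fun y =>
      (TopologicalSpace.denseRange_denseSeq Y).exists_dist_lt y hε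
    -- `y` is sent to the chosen point for the first term of the dense sequence within `ε` of `y`,
    -- so that the map factors through `ℕ`.
    refine ⟨fun y => s (TopologicalSpace.denseSeq Y (Nat.find (hN y))), ?_, fun y => ?_⟩
    · exact (measurable_from_nat (f := fun n => s (TopologicalSpace.denseSeq Y n))).comp
        (measurable_find hN fun k => measurableSet_ball (x := TopologicalSpace.denseSeq Y k))
    · have h := Nat.find_spec (hN y)
      linarith [dist_triangle y (TopologicalSpace.denseSeq Y (Nat.find (hN y)))
        (f (s (TopologicalSpace.denseSeq Y (Nat.find (hN y))))),
        hs (TopologicalSpace.denseSeq Y (Nat.find (hN y)))]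
  have hgf : ∀ x, dist x (g (f x)) ≤ 3 * ε := fun x => by
    linarith [(abs_le.1 (hiso x (g (f x)))).1, hfg (f x)]
  refine ⟨g, hg, ⟨fun y y' => ?_, fun x => ⟨f x, ?_⟩⟩, fun x => ?_, fun y => ?_⟩
  · have h₁ := abs_le.1 (hiso (g y) (g y'))
    have h₂ := dist_triangle4 y (f (g y)) (f (g y')) y'
    have h₃ := dist_triangle4 (f (g y)) y y' (f (g y'))
    rw [dist_comm (f (g y')) y'] at h₂
    rw [dist_comm (f (g y)) y] at h₃
    rw [abs_le]
    constructor <;> linarith [hfg y, hfg y', h₁.1, h₁.2]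
  · linarith [hgf x]
  · linarith [hgf x]
  · linarith [hfg y]
end

section
/- Let G be a group generated by a finite set S, and let α and β be actions of G by homeomorphisms on Polish metric spaces (X,d_X) and (Y,d_Y) respectively. Let ε > 0 and let ε' with 0 < ε' ≤ ε be such that for all y, y' ∈ Y with d_Y(y,y') < 3ε' one has d_Y(β_s(y), β_s(y')) < ε for every s ∈ S. Suppose f : X → Y is an (ε',S)-GH approximation from α to β. Then there exists a Borel measurable map f_1 : X → Y which is a (5ε,S)-GH approximation from α to β. -/
open Metric

/-!
Partition `X` into countably many Borel pieces, each contained in a small ball around a point `u` of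
a countable dense set, and let `f₁` be constantly `f u` on the piece belonging to `u`. Then `f₁` is
Borel because it factors through a measurable map to `ℕ`, and it stays close to `f` because `f`
moves nearby points to nearby points up to the error `ε'`. With balls of radius `ε' / 2` this gives
`dist (f₁ x) (f x) < 2 * ε'`, which is within the range where the modulus hypothesis on `β`
applies; each condition on `f₁` then follows from that on `f` by the triangle inequality.
-/

/-- Given `f` on a separable metric space, not assumed measurable, some `p` moves every point by less
than `δ` and makes `f ∘ p` Borel: `p` sends `x` to the first term of a dense sequence within `δ`
of `x`. -/
theorem exists_countable_retraction {X Y : Type*} [MetricSpace X]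
    [TopologicalSpace.SeparableSpace X] [MeasurableSpace X] [BorelSpace X] [MeasurableSpace Y]
    (f : X → Y) {δ : ℝ} (hδ : 0 < δ) :
    ∃ p : X → X, (∀ x, dist x (p x) < δ) ∧ Measurable (fun x => f (p x)) := by
  classical
  rcases isEmpty_or_nonempty X with hX | hX
  · exact ⟨id, fun x => hX.elim x, measurable_of_empty _⟩
  · let u := TopologicalSpace.denseSeq X
    have hu : ∀ x, ∃ n, dist x (u n) < δ := fun x =>
      (TopologicalSpace.denseRange_denseSeq X).exists_dist_lt x hδ
    refine ⟨fun x => u (Nat.find (hu x)), fun x => Nat.find_spec (hu x), ?_⟩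
    have hN : Measurable fun x => Nat.find (hu x) :=
      measurable_find hu fun n => measurableSet_ball (x := u n) (ε := δ)
    exact (measurable_from_nat (f := fun n => f (u n))).comp hN

theorem stmt17 {G : Type*} [Group G]
    (S : Finset G) (hSgen : Subgroup.closure (S : Set G) = ⊤)
    {X Y : Type*}
    [MetricSpace X] [CompleteSpace X] [TopologicalSpace.SeparableSpace X]
    [MeasurableSpace X] [BorelSpace X]
    [MetricSpace Y] [CompleteSpace Y] [TopologicalSpace.SeparableSpace Y]
    [MeasurableSpace Y] [BorelSpace Y]
    (α : G → X → X) (hα : IsActionOf α) (hαc : ∀ g : G, Continuous (α g))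
    (β : G → Y → Y) (hβ : IsActionOf β) (hβc : ∀ g : G, Continuous (β g))
    (ε ε' : ℝ) (hε : 0 < ε) (hε'0 : 0 < ε') (hε'ε : ε' ≤ ε)
    (hmod : ∀ y y' : Y, dist y y' < 3 * ε' → ∀ s ∈ S, dist (β s y) (β s y') < ε)
    (f : X → Y) (hf : IsGHA α β ε' (S : Set G) f) :
    ∃ f₁ : X → Y, Measurable f₁ ∧ IsGHA α β (5 * ε) (S : Set G) f₁ := by
  obtain ⟨⟨hdist, hsurj⟩, heq⟩ := hf
  obtain ⟨p, hp, hmeas⟩ := exists_countable_retraction f (half_pos hε'0)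
  have hclose : ∀ x, dist (f (p x)) (f x) < 2 * ε' := fun x => by
    have h1 := abs_le.1 (hdist (p x) x)
    have h2 := hp x
    rw [dist_comm] at h2
    linarith [h1.2]
  refine ⟨fun x => f (p x), hmeas, ⟨fun x x' => ?_, fun y => ?_⟩, fun s hs x => ?_⟩
  · have h1 := abs_le.1 (hdist (p x) (p x'))
    have h2 := dist_triangle4 x (p x) (p x') x'
    have h3 := dist_triangle4 (p x) x x' (p x')
    rw [dist_comm (p x') x'] at h2
    rw [dist_comm (p x) x] at h3
    have h4 := hp x
    have h5 := hp x'
    rw [abs_le]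
    constructor <;> linarith [h1.1, h1.2]
  · obtain ⟨x, hx⟩ := hsurj y
    refine ⟨x, ?_⟩
    have h1 := dist_triangle y (f x) (f (p x))
    rw [dist_comm (f x)] at h1
    linarith [hclose x]
  · have h1 := dist_triangle4 (β s (f (p x))) (β s (f x)) (f (α s x)) (f (p (α s x)))
    have h2 := hmod (f (p x)) (f x) (by linarith [hclose x]) s hs
    have h3 := heq s hs x
    have h4 := hclose (α s x)
    rw [dist_comm] at h4
    linarith
end
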